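/- Let Γ be a finite extensive-form game with perfect recall. A behavioral strategy profile β* is a subgame perfect equilibrium in behavioral strategies if and only if there exist a behavioral strategy profile β̃*, a belief system μ*, and multipliers λ*, λ̃*, ζ*, ζ̃* such that (β*, β̃*, μ*, λ*, λ̃*, ζ*, ζ̃*) solves the system: u^i((a, ϱ^i_{I_i^j}(β^{-I_i^j}, β̃)) ⋄ I_i^j) + λ^i_{I_i^j}(a) − ζ^i_{I_i^j} = 0 and u^i(a, ϱ^i_{I_i^j}(β^{-I_i^j}, β̃), μ | I_i^j) + λ̃^i_{I_i^j}(a) − ζ̃^i_{I_i^j} = 0 for all i ∈ N, j ∈ M_i, a ∈ A(I_i^j); Y^i(I_i^j|β) μ^i_{I_i^j}(h) = Y^i(h|β) and μ^i_{I_i^j}(h) ≥ 0 for all i, j, h ∈ I_i^j; Σ_{h ∈ I_i^j} μ^i_{I_i^j}(h) = 1, Σ_{a ∈ A(I_i^j)} β^i_{I_i^j}(a) = 1, Σ_{a ∈ A(I_i^j)} β̃^i_{I_i^j}(a) = 1 for all i, j; β^i_{I_i^j}(a) λ^i_{I_i^j}(a) = 0, β̃^i_{I_i^j}(a) λ̃^i_{I_i^j}(a)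 = 0, and β^i_{I_i^j}(a) ≥ 0, λ^i_{I_i^j}(a) ≥ 0, β̃^i_{I_i^j}(a) ≥ 0, λ̃^i_{I_i^j}(a) ≥ 0 for all i, j, a ∈ A(I_i^j). -/

import Mathlib

open scoped Classical

noncomputable section

/-- A finite extensive-form game.  Actions are labelled by natural numbers drawn from the
finite pool `actFinset`; a history is the list of actions taken so far; players are `Fin n`
and `P h = none` means that the chance player moves after `h`.  The information sets of
player `i` are `Info i j` for `j < m i`, and `infoIdx h` is the index of the information
set containing a nonterminal history `h` at which some player moves.  Payoffs `u i h` are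
relevant on terminal histories. -/
structure EFG where
  n : ℕ
  actFinset : Finset ℕ
  H : Finset (List ℕ)
  P : List ℕ → Option (Fin n)
  fc : List ℕ → ℕ → ℝ
  m : Fin n → ℕ
  Info : Fin n → ℕ → Finset (List ℕ)
  infoIdx : List ℕ → ℕ
  u : Fin n → List ℕ → ℝ
  empty_mem : ([] : List ℕ) ∈ H
  prefixClosed : ∀ h ∈ H, ∀ h' : List ℕ, h' <+: h → h' ∈ H
  act_mem : ∀ (h : List ℕ) (a : ℕ), h ++ [a] ∈ H → a ∈ actFinset
  fc_nonneg : ∀ h a, 0 ≤ fc h a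
  fc_sum : ∀ h ∈ H, P h = none → (∃ a, h ++ [a] ∈ H) →
    ∑ a ∈ actFinset.filter (fun a => h ++ [a] ∈ H), fc h a = 1
  info_spec : ∀ (i : Fin n) (j : ℕ) (h : List ℕ), j < m i →
    (h ∈ Info i j ↔ h ∈ H ∧ P h = some i ∧ (∃ a, h ++ [a] ∈ H) ∧ infoIdx h = j)
  infoIdx_lt : ∀ (i : Fin n), ∀ h ∈ H, P h = some i → (∃ a, h ++ [a] ∈ H) → infoIdx h < m i
  info_nonempty : ∀ (i : Fin n) (j : ℕ), j < m i → (Info i j).Nonempty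
  info_actions : ∀ (i : Fin n) (j : ℕ), j < m i → ∀ h ∈ Info i j, ∀ h' ∈ Info i j,
    ∀ a : ℕ, (h ++ [a] ∈ H ↔ h' ++ [a] ∈ H)
  act_unique : ∀ (h h' : List ℕ) (a : ℕ), h ∈ H → h' ∈ H → h ++ [a] ∈ H → h' ++ [a] ∈ H →
    P h = P h' ∧ infoIdx h = infoIdx h'

namespace EFG

/-- Behavioral strategy profiles (player, information-set index, action ↦ probability). -/
abbrev Profile (G : EFG) : Type := Fin G.n → ℕ → ℕ → ℝ

/-- Belief systems (player, information-set index, history ↦ probability). -/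
abbrev Belief (G : EFG) : Type := Fin G.n → ℕ → List ℕ → ℝ

variable (G : EFG)

/-- The set `Z` of terminal histories. -/
def Zset : Finset (List ℕ) := G.H.filter fun h => ∀ a : ℕ, h ++ [a] ∉ G.H

/-- The set `A(h)` of actions available after a history. -/
def A (h : List ℕ) : Finset ℕ := G.actFinset.filter fun a => h ++ [a] ∈ G.H

/-- The common action set `A(I_i^j)` of an information set. -/
def infoA (i : Fin G.n) (j : ℕ) : Finset ℕ := (G.Info i j).sup fun h => G.A h

/-- A behavioral strategy of player `i`: a probability distribution on `A(I_i^j)` for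
each information set `I_i^j`. -/
def IsBehStrategy (i : Fin G.n) (b : ℕ → ℕ → ℝ) : Prop :=
  ∀ j < G.m i, (∀ a ∈ G.infoA i j, 0 ≤ b j a) ∧ ∑ a ∈ G.infoA i j, b j a = 1

/-- A behavioral strategy profile. -/
def IsBehProfile (β : G.Profile) : Prop := ∀ i : Fin G.n, G.IsBehStrategy i (β i)

/-- The probability of action `a` at history `h`: the chance distribution if the chance
player moves, and the mover's behavioral strategy otherwise. -/
def moveProb (β : G.Profile) (h : List ℕ) (a : ℕ) : ℝ :=
  (G.P h).elim (G.fc h a) fun i => β i (G.infoIdx h) a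

/-- Player `i`'s record `X_i` of the information sets he encounters along a history and the
actions he takes at them, accumulated starting from the prefix `pre`. -/
def recordFrom (i : Fin G.n) : List ℕ → List ℕ → List (ℕ × ℕ)
  | _, [] => []
  | pre, b :: rest =>
    (if G.P pre = some i then [(G.infoIdx pre, b)] else []) ++ recordFrom i (pre ++ [b]) rest

/-- Perfect recall. -/
def PerfectRecall : Prop :=
  ∀ (i : Fin G.n) (j : ℕ), j < G.m i →
    ∀ h ∈ G.Info i j, ∀ h' ∈ G.Info i j, G.recordFrom i [] h = G.recordFrom i [] h'

/-- Product of the move probabilities along `rest`, continuing from the prefix `pre`. -/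
def prodAlong (β : G.Profile) : List ℕ → List ℕ → ℝ
  | _, [] => 1
  | pre, b :: rest => G.moveProb β pre b * prodAlong β (pre ++ [b]) rest

/-- `ω(h|β)`: the probability that the moves along `h` are played under `β`. -/
def omega (β : G.Profile) (h : List ℕ) : ℝ := G.prodAlong β [] h

/-- `ω(I_i^j|β)`. -/
def omegaInfo (i : Fin G.n) (j : ℕ) (β : G.Profile) : ℝ := ∑ h ∈ G.Info i j, G.omega β h

/-- Product of the move probabilities along `rest` from `pre`, disregarding player `i`'s
own moves. -/
def prodAlongNot (i : Fin G.n) (β : G.Profile) : List ℕ → List ℕ → ℝ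
  | _, [] => 1
  | pre, b :: rest =>
    (if G.P pre = some i then 1 else G.moveProb β pre b) * prodAlongNot i β (pre ++ [b]) rest

/-- `S^i(h|β)`: probability of the moves along `h`, disregarding player `i`'s own moves. -/
def Sh (i : Fin G.n) (β : G.Profile) (h : List ℕ) : ℝ := G.prodAlongNot i β [] h

/-- `S^i(I_i^j|β)`. -/
def SInfo (i : Fin G.n) (j : ℕ) (β : G.Profile) : ℝ := ∑ h ∈ G.Info i j, G.Sh i β h

/-- Product of the move probabilities along `rest` from `pre`, with the factor at prefixes
lying in `I_i^j` omitted. -/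
def prodAlongSkip (i : Fin G.n) (j : ℕ) (β : G.Profile) : List ℕ → List ℕ → ℝ
  | _, [] => 1
  | pre, b :: rest =>
    (if pre ∈ G.Info i j then 1 else G.moveProb β pre b) * prodAlongSkip i j β (pre ++ [b]) rest

/-- `q ∈ M(a, I_i^j)`: `I_i^q` is a first information set of player `i` after action `a`
(every history in `I_i^q` contains `a`, with no later action of `a` lying in any action set
of player `i`). -/
def FirstAfter (i : Fin G.n) (a : ℕ) (q : ℕ) : Prop :=
  q < G.m i ∧ ∀ h ∈ G.Info i q, ∃ l₁ l₂ : List ℕ,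
    h = l₁ ++ a :: l₂ ∧ ∀ b ∈ l₂, ∀ p < G.m i, b ∉ G.infoA i p

/-- `q ∈ M(I_i^j) = ∪_{a ∈ A(I_i^j)} M(a, I_i^j)`. -/
def MInfo (i : Fin G.n) (j : ℕ) (q : ℕ) : Prop := ∃ a ∈ G.infoA i j, G.FirstAfter i a q

/-- `q ∈ Λ(a, I_i^j)`: every history in `I_i^q` contains the action `a`. -/
def LambdaSet (i : Fin G.n) (a : ℕ) (q : ℕ) : Prop :=
  q < G.m i ∧ ∀ h ∈ G.Info i q, ∃ l₁ l₂ : List ℕ, h = l₁ ++ a :: l₂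

/-- `ϱ^i_{I_i^j}(β, β̃)`: replace player `i`'s component of `β` by that of `β̃` at every
information set `I_i^q` such that some history in `I_i^q` contains an action of `A(I_i^j)`. -/
def rho (i : Fin G.n) (j : ℕ) (β βt : G.Profile) : G.Profile := fun p q =>
  if p = i ∧ ∃ h ∈ G.Info i q, ∃ b ∈ h, b ∈ G.infoA i j then βt i q else β p q

/-- A belief system: a probability distribution on each information set. -/
def IsBelief (μ : G.Belief) : Prop :=
  ∀ (i : Fin G.n) (j : ℕ), j < G.m i →
    (∀ h ∈ G.Info i j, 0 ≤ μ i j h) ∧ ∑ h ∈ G.Info i j, μ i j h = 1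

/-- A self-independent belief system for `β`:
`S^i(I_i^j|β) · μ^i_{I_i^j}(h) = S^i(h|β)`. -/
def SelfIndep (β : G.Profile) (μ : G.Belief) : Prop :=
  ∀ (i : Fin G.n) (j : ℕ), j < G.m i → ∀ h ∈ G.Info i j,
    G.SInfo i j β * μ i j h = G.Sh i β h

/-- Auxiliary for `ν`: scan `rest` from `pre` for the subhistory lying in `I_i^j`, then
weight by the belief and multiply the move probabilities of the remaining moves (the move
taken at the subhistory itself being skipped). -/
def nuAux (i : Fin G.n) (j : ℕ) (β : G.Profile) (w : List ℕ → ℝ) : List ℕ → List ℕ → ℝ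
  | _, [] => 0
  | pre, b :: rest =>
    if pre ∈ G.Info i j then w pre * G.prodAlong β (pre ++ [b]) rest
    else nuAux i j β w (pre ++ [b]) rest

/-- `ν^i_{I_i^j}(h | a, β^{-I_i^j}, μ)` (it does not involve the component of `β` at
`I_i^j`). -/
def nu (i : Fin G.n) (j : ℕ) (β : G.Profile) (μ : G.Belief) (h : List ℕ) : ℝ :=
  G.nuAux i j β (μ i j) [] h

/-- `u^i((a, β^{-I_i^j}) ∧ I_i^j)`. -/
def uWedgeAct (i : Fin G.n) (j : ℕ) (a : ℕ) (β : G.Profile) : ℝ :=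
  ∑ h ∈ G.Zset.filter (fun h => a ∈ h), G.u i h * G.prodAlongSkip i j β [] h

/-- `u^i(β ∧ I_i^j)`. -/
def uWedge (i : Fin G.n) (j : ℕ) (β : G.Profile) : ℝ :=
  ∑ h ∈ G.Zset.filter (fun h => ∃ b ∈ h, b ∈ G.infoA i j), G.u i h * G.omega β h

/-- The conditional expected payoff `u^i(a, β^{-I_i^j}, μ | I_i^j)`. -/
def uCond (i : Fin G.n) (j : ℕ) (a : ℕ) (β : G.Profile) (μ : G.Belief) : ℝ :=
  ∑ h ∈ G.Zset.filter (fun h => a ∈ h), G.u i h * G.nu i j β μ h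

/-- The expected payoff `u^i(β)`. -/
def uExp (i : Fin G.n) (β : G.Profile) : ℝ := ∑ h ∈ G.Zset, G.u i h * G.omega β h

/-- The profile obtained from `β` by replacing all of player `i`'s components by `b`. -/
def replace (β : G.Profile) (i : Fin G.n) (b : ℕ → ℕ → ℝ) : G.Profile :=
  fun p => if p = i then b else β p

/-- `β` is a Nash equilibrium in behavioral strategies. -/
def IsNash (β : G.Profile) : Prop :=
  G.IsBehProfile β ∧ ∀ (i : Fin G.n) (b : ℕ → ℕ → ℝ), G.IsBehStrategy i b →
    G.uExp i (G.replace β i b) ≤ G.uExp i β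

/-- `(β, β̃, μ)` satisfies the Nash characterization (Definition 2 of the paper). -/
def NashChar (β βt : G.Profile) (μ : G.Belief) : Prop :=
  (∀ (i : Fin G.n) (j : ℕ), j < G.m i → ∀ a' ∈ G.infoA i j, ∀ a'' ∈ G.infoA i j,
    G.uWedgeAct i j a' (G.rho i j β βt) < G.uWedgeAct i j a'' (G.rho i j β βt) →
    β i j a' = 0) ∧
  (∀ (i : Fin G.n) (j : ℕ), j < G.m i → ∀ a' ∈ G.infoA i j, ∀ a'' ∈ G.infoA i j,
    G.uCond i j a' (G.rho i j β βt) μ < G.uCond i j a'' (G.rho i j β βt) μ →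
    βt i j a' = 0) ∧
  G.IsBelief μ ∧ G.SelfIndep β μ

/-- `r` is the root of a subgame: every information set lies entirely inside or entirely
outside the set of histories extending `r`. -/
def IsSubgameRoot (r : List ℕ) : Prop :=
  r ∈ G.H ∧ ∀ (i : Fin G.n) (j : ℕ), j < G.m i →
    (∀ h ∈ G.Info i j, r <+: h) ∨ ∀ h ∈ G.Info i j, ¬ r <+: h

/-- The depth `g` of the smallest subgame containing `A(I_i^j)` (the length of the longest
subgame root preceding every history of `I_i^j`). -/
def sgDepthInfo (i : Fin G.n) (j : ℕ) : ℕ :=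
  (G.H.filter fun r => G.IsSubgameRoot r ∧ ∀ h ∈ G.Info i j, r <+: h).sup List.length

/-- The depth `q(h)` of the smallest subgame containing the last action of `h`. -/
def sgDepthHist (h : List ℕ) : ℕ :=
  (G.H.filter fun r => G.IsSubgameRoot r ∧ r <+: h.dropLast).sup List.length

/-- `C^i_{I_i^j}(h|β)`: product of move probabilities along `h` within the smallest subgame
containing `A(I_i^j)`. -/
def Ch (i : Fin G.n) (j : ℕ) (β : G.Profile) (h : List ℕ) : ℝ :=
  G.prodAlong β (h.take (G.sgDepthInfo i j)) (h.drop (G.sgDepthInfo i j))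

/-- `C^i_{I_i^j}(I_i^j|β)`. -/
def CInfo (i : Fin G.n) (j : ℕ) (β : G.Profile) : ℝ := ∑ h ∈ G.Info i j, G.Ch i j β h

/-- `u^i((a, β^{-I_i^j}) ⋄ I_i^j)`. -/
def uDiamondAct (i : Fin G.n) (j : ℕ) (a : ℕ) (β : G.Profile) : ℝ :=
  ∑ h ∈ G.Zset.filter (fun h => a ∈ h), G.u i h *
    G.prodAlongSkip i j β (h.take (G.sgDepthInfo i j)) (h.drop (G.sgDepthInfo i j))

/-- `Y^i(h|β)`: like `S^i(h|β)` but within the smallest subgame containing the last action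
of `h`. -/
def Yh (i : Fin G.n) (β : G.Profile) (h : List ℕ) : ℝ :=
  G.prodAlongNot i β (h.take (G.sgDepthHist h)) (h.drop (G.sgDepthHist h))

/-- `Y^i(I_i^j|β)`. -/
def YInfo (i : Fin G.n) (j : ℕ) (β : G.Profile) : ℝ := ∑ h ∈ G.Info i j, G.Yh i β h

/-- The belief condition `Y^i(I_i^j|β) · μ^i_{I_i^j}(h) = Y^i(h|β)`. -/
def YConsistent (β : G.Profile) (μ : G.Belief) : Prop :=
  ∀ (i : Fin G.n) (j : ℕ), j < G.m i → ∀ h ∈ G.Info i j,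
    G.YInfo i j β * μ i j h = G.Yh i β h

/-- The expected payoff of player `i` in the subgame rooted at `r` (payoffs of terminal
histories extending `r`, weighted by the move probabilities within the subgame). -/
def uExpFrom (i : Fin G.n) (β : G.Profile) (r : List ℕ) : ℝ :=
  ∑ h ∈ G.Zset.filter (fun h => r <+: h), G.u i h * G.prodAlong β r (h.drop r.length)

/-- `β` is a subgame perfect equilibrium in behavioral strategies: its restriction to every
subgame is a Nash equilibrium in behavioral strategies of that subgame. -/
def IsSubgamePerfect (β : G.Profile) : Prop :=
  G.IsBehProfile β ∧ ∀ r : List ℕ, G.IsSubgameRoot r →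
    ∀ (i : Fin G.n) (b : ℕ → ℕ → ℝ), G.IsBehStrategy i b →
      G.uExpFrom i (G.replace β i b) r ≤ G.uExpFrom i β r

/-- `(β, β̃, μ)` satisfies the subgame perfect characterization (Definition 6 of the
paper). -/
def SubgameChar (β βt : G.Profile) (μ : G.Belief) : Prop :=
  (∀ (i : Fin G.n) (j : ℕ), j < G.m i → ∀ a' ∈ G.infoA i j, ∀ a'' ∈ G.infoA i j,
    G.uDiamondAct i j a' (G.rho i j β βt) < G.uDiamondAct i j a'' (G.rho i j β βt) →
    β i j a' = 0) ∧
  (∀ (i : Fin G.n) (j : ℕ), j < G.m i → ∀ a' ∈ G.infoA i j, ∀ a'' ∈ G.infoA i j,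
    G.uCond i j a' (G.rho i j β βt) μ < G.uCond i j a'' (G.rho i j β βt) μ →
    βt i j a' = 0) ∧
  G.IsBelief μ ∧ G.YConsistent β μ

/-- `(β, μ)` is a semi-sequential equilibrium. -/
def SemiSeqEq (β : G.Profile) (μ : G.Belief) : Prop :=
  G.IsBehProfile β ∧ G.IsBelief μ ∧ G.SelfIndep β μ ∧
  ∀ (i : Fin G.n) (j : ℕ), j < G.m i → ∀ a' ∈ G.infoA i j, ∀ a'' ∈ G.infoA i j,
    G.uCond i j a' β μ < G.uCond i j a'' β μ → β i j a' = 0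

/-- `(β, μ)` is a subgame perfect semi-sequential equilibrium. -/
def SubgameSemiSeqEq (β : G.Profile) (μ : G.Belief) : Prop :=
  G.IsBehProfile β ∧ G.IsBelief μ ∧ G.YConsistent β μ ∧
  ∀ (i : Fin G.n) (j : ℕ), j < G.m i → ∀ a' ∈ G.infoA i j, ∀ a'' ∈ G.infoA i j,
    G.uCond i j a' β μ < G.uCond i j a'' β μ → β i j a' = 0

/-- `d(I_i^j)`: the number of information sets of player `i` containing a prefix of some
history of `I_i^j` (counting `I_i^j` itself). -/
def dInfo (i : Fin G.n) (j : ℕ) : ℕ :=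
  ((Finset.range (G.m i)).filter
    (fun q => ∃ h ∈ G.Info i j, ∃ p : List ℕ, p <+: h ∧ p ∈ G.Info i q)).card

end EFG

namespace EFG

variable {G : EFG}

theorem x_pre_mem {h t : List ℕ} (hm : h ++ t ∈ G.H) : h ∈ G.H :=
  G.prefixClosed _ hm _ (List.prefix_append _ _)

theorem x_pre_mem' {h t : List ℕ} {x : ℕ} (hm : h ++ x :: t ∈ G.H) : h ++ [x] ∈ G.H :=
  G.prefixClosed _ hm _ ⟨t, by simp⟩

theorem x_mem_A {h : List ℕ} {x : ℕ} : x ∈ G.A h ↔ h ++ [x] ∈ G.H := by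
  unfold A
  rw [Finset.mem_filter]
  exact ⟨fun h => h.2, fun hh => ⟨G.act_mem _ _ hh, hh⟩⟩

theorem x_mem_infoA {i : Fin G.n} {j x : ℕ} :
    x ∈ G.infoA i j ↔ ∃ h ∈ G.Info i j, h ++ [x] ∈ G.H := by
  unfold infoA
  rw [Finset.mem_sup]
  simp only [x_mem_A]

theorem x_infoA_of_move {i : Fin G.n} {h : List ℕ} {x : ℕ} (hx : h ++ [x] ∈ G.H)
    (hP : G.P h = some i) :
    G.infoIdx h < G.m i ∧ h ∈ G.Info i (G.infoIdx h) ∧ x ∈ G.infoA i (G.infoIdx h) := by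
  have hh : h ∈ G.H := x_pre_mem hx
  have hlt := G.infoIdx_lt i h hh hP ⟨x, hx⟩
  have hI : h ∈ G.Info i (G.infoIdx h) := (G.info_spec i _ h hlt).2 ⟨hh, hP, ⟨x, hx⟩, rfl⟩
  exact ⟨hlt, hI, x_mem_infoA.2 ⟨h, hI, hx⟩⟩

theorem x_info {i : Fin G.n} {j : ℕ} (hj : j < G.m i) {h : List ℕ} (hI : h ∈ G.Info i j) :
    h ∈ G.H ∧ G.P h = some i ∧ G.infoIdx h = j := by
  obtain ⟨a, b, c, d⟩ := (G.info_spec i j h hj).1 hI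
  exact ⟨a, b, d⟩

theorem x_move_of_infoA {i : Fin G.n} {j : ℕ} (hj : j < G.m i) {h : List ℕ} {x : ℕ}
    (hx : x ∈ G.infoA i j) (hh : h ++ [x] ∈ G.H) : h ∈ G.Info i j := by
  obtain ⟨h', hI, hx'⟩ := x_mem_infoA.1 hx
  obtain ⟨h1, h2, h3⟩ := x_info hj hI
  obtain ⟨e1, e2⟩ := G.act_unique h h' x (x_pre_mem hh) h1 hh hx'
  exact (G.info_spec i j h hj).2 ⟨x_pre_mem hh, e1.trans h2, ⟨x, hh⟩, e2.trans h3⟩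

theorem x_infoA_of_info {i : Fin G.n} {j : ℕ} {h : List ℕ} {x : ℕ}
    (hI : h ∈ G.Info i j) (hh : h ++ [x] ∈ G.H) : x ∈ G.infoA i j :=
  x_mem_infoA.2 ⟨h, hI, hh⟩

theorem x_infoA_nonempty {i : Fin G.n} {j : ℕ} (hj : j < G.m i) : (G.infoA i j).Nonempty := by
  obtain ⟨h, hI⟩ := G.info_nonempty i j hj
  obtain ⟨_, _, ⟨a, ha⟩, _⟩ := (G.info_spec i j h hj).1 hI
  exact ⟨a, x_infoA_of_info hI ha⟩

theorem x_record_append (i : Fin G.n) (pre l1 l2 : List ℕ) :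
    G.recordFrom i pre (l1 ++ l2) =
      G.recordFrom i pre l1 ++ G.recordFrom i (pre ++ l1) l2 := by
  induction l1 generalizing pre with
  | nil => simp [recordFrom]
  | cons x l ih => simp [recordFrom, ih]

theorem x_record_mem (i : Fin G.n) (pre l : List ℕ) (p : ℕ × ℕ)
    (hp : p ∈ G.recordFrom i pre l) : p.2 ∈ l := by
  induction l generalizing pre with
  | nil => simp [recordFrom] at hp
  | cons x l ih =>
    simp only [recordFrom, List.mem_append] at hp
    rcases hp with hp | hp
    · split_ifs at hp
      · simp at hp; subst hp; simp
      · simp at hp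
    · exact List.mem_cons_of_mem _ (ih _ hp)

theorem x_mem_transfer (hPR : G.PerfectRecall) {i : Fin G.n} {j q : ℕ} (hj : j < G.m i)
    (hq : q < G.m i) {h h' : List ℕ} (hI : h ∈ G.Info i q) (hI' : h' ∈ G.Info i q) {b : ℕ}
    (hb : b ∈ G.infoA i j) (hbh : b ∈ h) : b ∈ h' := by
  obtain ⟨l1, l2, rfl⟩ := List.append_of_mem hbh
  have hH := (x_info hq hI).1
  have h1 := x_info hj (x_move_of_infoA hj hb (x_pre_mem' hH))
  have hr := hPR i q hq _ hI _ hI'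
  rw [x_record_append] at hr
  have : (j, b) ∈ G.recordFrom i [] h' := by
    rw [← hr]
    simp [recordFrom, h1.2.1, h1.2.2]
  exact x_record_mem _ _ _ _ this

theorem x_no_self (hPR : G.PerfectRecall) {i : Fin G.n} {j : ℕ} (hj : j < G.m i)
    {h : List ℕ} (hI : h ∈ G.Info i j) {b : ℕ}
    (hb : b ∈ G.infoA i j) (hbh : b ∈ h) : False := by
  obtain ⟨l1, l2, rfl⟩ := List.append_of_mem hbh
  have hH := (x_info hj hI).1
  have hI1 := (x_move_of_infoA hj hb (x_pre_mem' hH))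
  have h1 := x_info hj hI1
  have hr := congrArg List.length (hPR i j hj _ hI _ hI1)
  rw [x_record_append] at hr
  simp [recordFrom, h1.2.1] at hr

theorem x_prefix_self (hPR : G.PerfectRecall) {i : Fin G.n} {j : ℕ} (hj : j < G.m i)
    {h h' : List ℕ} (hI : h ∈ G.Info i j) (hI' : h' ∈ G.Info i j) (hp : h <+: h') : h = h' := by
  obtain ⟨t, rfl⟩ := hp
  cases t with
  | nil => simp
  | cons y t =>
    exact (x_no_self hPR hj hI' (x_infoA_of_info hI (x_pre_mem' (x_info hj hI').1))
      (by simp)).elim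

theorem x_prodAlong_append (β : G.Profile) (pre l1 l2 : List ℕ) :
    G.prodAlong β pre (l1 ++ l2) = G.prodAlong β pre l1 * G.prodAlong β (pre ++ l1) l2 := by
  induction l1 generalizing pre with
  | nil => simp [prodAlong]
  | cons x l ih => simp [prodAlong, ih, mul_assoc]

theorem x_prodNot_append (i : Fin G.n) (β : G.Profile) (pre l1 l2 : List ℕ) :
    G.prodAlongNot i β pre (l1 ++ l2) =
      G.prodAlongNot i β pre l1 * G.prodAlongNot i β (pre ++ l1) l2 := by
  induction l1 generalizing pre with
  | nil => simp [prodAlongNot]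
  | cons x l ih => simp only [prodAlongNot, List.cons_append, ih, mul_assoc]; simp

theorem x_prodSkip_append (i : Fin G.n) (j : ℕ) (β : G.Profile) (pre l1 l2 : List ℕ) :
    G.prodAlongSkip i j β pre (l1 ++ l2) =
      G.prodAlongSkip i j β pre l1 * G.prodAlongSkip i j β (pre ++ l1) l2 := by
  induction l1 generalizing pre with
  | nil => simp [prodAlongSkip]
  | cons x l ih => simp only [prodAlongSkip, List.cons_append, ih, mul_assoc]; simp

theorem x_prodAlong_congr (β β' : G.Profile) (pre l : List ℕ)
    (h : ∀ l1 x l2, l = l1 ++ x :: l2 →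
      G.moveProb β (pre ++ l1) x = G.moveProb β' (pre ++ l1) x) :
    G.prodAlong β pre l = G.prodAlong β' pre l := by
  induction l generalizing pre with
  | nil => simp [prodAlong]
  | cons x l ih =>
    simp only [prodAlong]
    rw [ih]
    · have := h [] x l rfl
      simp at this
      rw [this]
    · intro l1 y l2 e
      have := h (x :: l1) y l2 (by simp [e])
      simpa using this

theorem x_skip_eq (i : Fin G.n) (j : ℕ) (β : G.Profile) (pre l : List ℕ)
    (h : ∀ l1 x l2, l = l1 ++ x :: l2 → pre ++ l1 ∉ G.Info i j) :
    G.prodAlongSkip i j β pre l = G.prodAlong β pre l := by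
  induction l generalizing pre with
  | nil => simp [prodAlong, prodAlongSkip]
  | cons x l ih =>
    simp only [prodAlong, prodAlongSkip]
    have h0 := h [] x l rfl
    simp at h0
    rw [ih, if_neg h0]
    intro l1 y l2 e
    have := h (x :: l1) y l2 (by simp [e])
    simpa using this

theorem x_own (i : Fin G.n) (β : G.Profile) (b : ℕ → ℕ → ℝ) (pre l : List ℕ) :
    G.prodAlong (G.replace β i b) pre l =
      ((G.recordFrom i pre l).map (fun p => b p.1 p.2)).prod * G.prodAlongNot i β pre l := by
  induction l generalizing pre with
  | nil => simp [prodAlong, prodAlongNot, recordFrom]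
  | cons x l ih =>
    simp only [prodAlong, prodAlongNot, recordFrom, ih]
    by_cases hP : G.P pre = some i
    · simp [hP, moveProb, replace, mul_assoc]
    · rw [if_neg hP, if_neg hP]
      have : G.moveProb (G.replace β i b) pre x = G.moveProb β pre x := by
        unfold moveProb
        cases hc : G.P pre with
        | none => rfl
        | some p =>
          have : p ≠ i := fun e => hP (by rw [hc, e])
          simp [replace, this]
      rw [this]; simp; ring

theorem x_own_nonneg (i : Fin G.n) (b : ℕ → ℕ → ℝ) (hb : G.IsBehStrategy i b)
    (pre l : List ℕ) (hH : pre ++ l ∈ G.H) :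
    0 ≤ ((G.recordFrom i pre l).map (fun p => b p.1 p.2)).prod := by
  induction l generalizing pre with
  | nil => simp [recordFrom]
  | cons x l ih =>
    have h1 := ih (pre ++ [x]) (by simpa using hH)
    simp only [recordFrom]
    by_cases hP : G.P pre = some i
    · obtain ⟨e1, e2, e3⟩ := x_infoA_of_move (x_pre_mem' hH) hP
      simp [hP]
      exact mul_nonneg ((hb _ e1).1 _ e3) h1
    · simpa [hP] using h1

theorem x_move_nonneg (β : G.Profile) (hβ : G.IsBehProfile β) (pre : List ℕ) (x : ℕ)
    (hH : pre ++ [x] ∈ G.H) : 0 ≤ G.moveProb β pre x := by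
  unfold moveProb
  cases hc : G.P pre with
  | none => exact G.fc_nonneg _ _
  | some p =>
    obtain ⟨e1, e2, e3⟩ := x_infoA_of_move hH hc
    exact (hβ p _ e1).1 _ e3

theorem x_not_nonneg (i : Fin G.n) (β : G.Profile) (hβ : G.IsBehProfile β)
    (pre l : List ℕ) (hH : pre ++ l ∈ G.H) : 0 ≤ G.prodAlongNot i β pre l := by
  induction l generalizing pre with
  | nil => simp [prodAlongNot]
  | cons x l ih =>
    have h1 := ih (pre ++ [x]) (by simpa using hH)
    simp only [prodAlongNot]
    refine mul_nonneg ?_ h1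
    split_ifs
    · exact zero_le_one
    · exact x_move_nonneg β hβ _ _ (x_pre_mem' hH)

theorem x_replace_self (β : G.Profile) (i : Fin G.n) : G.replace β i (β i) = β := by
  funext p
  unfold replace
  split_ifs with h
  · rw [h]
  · rfl

/-- Moves after `x ∈ A(I)` never hit `I` again. -/
theorem x_skip_after (hPR : G.PerfectRecall) {i : Fin G.n} {j : ℕ} (hj : j < G.m i)
    (β : G.Profile) {pre l : List ℕ} {x : ℕ} (hx : x ∈ G.infoA i j) (hxp : x ∈ pre) :
    G.prodAlongSkip i j β pre l = G.prodAlong β pre l := by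
  apply x_skip_eq
  intro l1 y l2 e hI
  exact x_no_self hPR hj hI hx (by simp [hxp])

theorem x_rho_after {i : Fin G.n} {j : ℕ}
    (β βt : G.Profile) (b : ℕ → ℕ → ℝ) {pre l : List ℕ} {x : ℕ} (hH : pre ++ l ∈ G.H)
    (hx : x ∈ G.infoA i j) (hxp : x ∈ pre) :
    G.prodAlong (G.rho i j (G.replace β i b) βt) pre l =
      G.prodAlong (G.replace β i (βt i)) pre l := by
  apply x_prodAlong_congr
  rintro l1 y l2 rfl
  unfold moveProb
  cases hc : G.P (pre ++ l1) with
  | none => rfl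
  | some p =>
    simp only [Option.elim]
    rw [← List.append_assoc] at hH
    by_cases hp : p = i
    · subst hp
      obtain ⟨e1, e2, e3⟩ := x_infoA_of_move (x_pre_mem' hH) hc
      unfold rho
      rw [if_pos ⟨rfl, _, e2, x, by simp [hxp], hx⟩]
      simp [replace]
    · simp [rho, replace, hp]

/-- Before reaching `I`, `rho` does not change anything. -/
theorem x_rho_move_before (hPR : G.PerfectRecall) {i : Fin G.n} {j : ℕ} (hj : j < G.m i)
    (β βt : G.Profile) {pre l : List ℕ} {x : ℕ} (hI : pre ++ x :: l ∈ G.Info i j) :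
    G.moveProb (G.rho i j β βt) pre x = G.moveProb β pre x := by
  unfold moveProb
  cases hc : G.P pre with
  | none => rfl
  | some p =>
    simp only [Option.elim]
    unfold rho
    rw [if_neg]
    rintro ⟨rfl, h, hh, b, hb, hbA⟩
    obtain ⟨e1, e2, e3⟩ := x_infoA_of_move (x_pre_mem' (x_info hj hI).1) hc
    have := x_mem_transfer hPR hj e1 hh e2 hbA hb
    exact x_no_self hPR hj hI hbA (by simp [this])

theorem x_not_info_before (hPR : G.PerfectRecall) {i : Fin G.n} {j : ℕ} (hj : j < G.m i)
    {pre l : List ℕ} {x : ℕ} (hI : pre ++ x :: l ∈ G.Info i j) : pre ∉ G.Info i j := by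
  intro hp
  exact x_no_self hPR hj hI (x_infoA_of_info hp (x_pre_mem' (x_info hj hI).1)) (by simp)

theorem x_skip_before (hPR : G.PerfectRecall) {i : Fin G.n} {j : ℕ} (hj : j < G.m i)
    (β βt : G.Profile) {pre l : List ℕ} (hI : pre ++ l ∈ G.Info i j) :
    G.prodAlongSkip i j (G.rho i j β βt) pre l = G.prodAlong β pre l := by
  rw [x_skip_eq]
  · apply x_prodAlong_congr
    rintro l1 x l2 rfl
    rw [← List.append_assoc] at hI
    exact x_rho_move_before hPR hj β βt hI
  · rintro l1 x l2 rfl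
    rw [← List.append_assoc] at hI
    exact x_not_info_before hPR hj hI

theorem x_skip_full (hPR : G.PerfectRecall) {i : Fin G.n} {j : ℕ} (hj : j < G.m i)
    (β βt : G.Profile) (b : ℕ → ℕ → ℝ) {r mid tl : List ℕ} {a : ℕ} (ha : a ∈ G.infoA i j)
    (hH : r ++ mid ++ a :: tl ∈ G.H) :
    G.prodAlongSkip i j (G.rho i j (G.replace β i b) βt) r (mid ++ a :: tl) =
      G.prodAlong (G.replace β i b) r mid *
        G.prodAlong (G.replace β i (βt i)) (r ++ mid ++ [a]) tl := by
  have hI := x_move_of_infoA hj ha (x_pre_mem' hH)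
  rw [x_prodSkip_append, x_skip_before hPR hj _ _ hI]
  simp only [prodAlongSkip]
  rw [if_pos hI, one_mul, x_skip_after hPR hj _ ha (by simp), x_rho_after _ _ _ (by simpa using hH) ha (by simp)]

theorem x_nuAux (hPR : G.PerfectRecall) {i : Fin G.n} {j : ℕ} (hj : j < G.m i)
    (β : G.Profile) (w : List ℕ → ℝ) {pre mid tl : List ℕ} {a : ℕ}
    (hI : pre ++ mid ∈ G.Info i j) :
    G.nuAux i j β w pre (mid ++ a :: tl) =
      w (pre ++ mid) * G.prodAlong β (pre ++ mid ++ [a]) tl := by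
  induction mid generalizing pre with
  | nil =>
    simp at hI
    simp [nuAux, hI]
  | cons x l ih =>
    simp only [nuAux, List.cons_append]
    rw [if_neg (x_not_info_before hPR hj hI), ih (by simpa using hI)]
    simp

theorem x_nu (hPR : G.PerfectRecall) {i : Fin G.n} {j : ℕ} (hj : j < G.m i)
    (β βt : G.Profile) (μ : G.Belief) {h tl : List ℕ} {a : ℕ} (ha : a ∈ G.infoA i j)
    (hH : h ++ a :: tl ∈ G.H) :
    G.nu i j (G.rho i j β βt) μ (h ++ a :: tl) =
      μ i j h * G.prodAlong (G.replace β i (βt i)) (h ++ [a]) tl := by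
  have hI := x_move_of_infoA hj ha (x_pre_mem' hH)
  unfold nu
  rw [x_nuAux hPR hj _ _ (by simpa using hI)]
  have := x_rho_after β βt (β i) (pre := h ++ [a]) (l := tl) (i := i) (j := j) (by simpa using hH) ha (by simp)
  rw [x_replace_self] at this
  simp [this]

/-- The telescoping identity along one path. -/
theorem x_telescope (hPR : G.PerfectRecall) (i : Fin G.n) (β βt : G.Profile) (b : ℕ → ℕ → ℝ)
    (pre rest : List ℕ) (hH : pre ++ rest ∈ G.H) :
    G.prodAlong (G.replace β i b) pre rest - G.prodAlong (G.replace β i (βt i)) pre rest =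
      ∑ j ∈ Finset.range (G.m i), ∑ a ∈ G.infoA i j,
        if a ∈ rest then (b j a - βt i j a) *
          G.prodAlongSkip i j (G.rho i j (G.replace β i b) βt) pre rest else 0 := by
  induction rest generalizing pre with
  | nil => simp [prodAlong]
  | cons x l ih =>
    have hH' : (pre ++ [x]) ++ l ∈ G.H := by simpa using hH
    have IH := ih (pre ++ [x]) hH'
    have hpx : pre ++ [x] ∈ G.H := x_pre_mem' hH
    simp only [prodAlong]
    by_cases hP : G.P pre = some i
    · obtain ⟨e1, e2, e3⟩ := x_infoA_of_move hpx hP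
      have hB : G.moveProb (G.replace β i b) pre x = b (G.infoIdx pre) x := by
        simp [moveProb, hP, replace]
      have hT : G.moveProb (G.replace β i (βt i)) pre x = βt i (G.infoIdx pre) x := by
        simp [moveProb, hP, replace]
      rw [hB, hT]
      have hno : ∀ a ∈ l, a ∉ G.infoA i (G.infoIdx pre) := by
        intro a hal haA
        obtain ⟨l1, l2, rfl⟩ := List.append_of_mem hal
        have hI := x_move_of_infoA e1 haA
          (h := pre ++ [x] ++ l1) (x_pre_mem' (by simpa using hH))
        exact x_no_self hPR e1 hI e3 (by simp)
      have key : ∀ j ∈ Finset.range (G.m i), ∀ a ∈ G.infoA i j,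
          (if a ∈ x :: l then (b j a - βt i j a) *
            G.prodAlongSkip i j (G.rho i j (G.replace β i b) βt) pre (x :: l) else 0) =
          (if j = G.infoIdx pre then if a = x then
            (b (G.infoIdx pre) x - βt i (G.infoIdx pre) x) *
              G.prodAlong (G.replace β i (βt i)) (pre ++ [x]) l else 0 else 0) +
          b (G.infoIdx pre) x * (if a ∈ l then (b j a - βt i j a) *
            G.prodAlongSkip i j (G.rho i j (G.replace β i b) βt) (pre ++ [x]) l else 0) := by
        intro j hj a ha
        have hj' : j < G.m i := Finset.mem_range.1 hj
        by_cases hjj : j = G.infoIdx pre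
        · subst hjj
          have hal : a ∉ l := fun h => hno a h ha
          by_cases hax : a = x
          · subst hax
            simp only [List.mem_cons, true_or, if_true, hal, if_false, prodAlongSkip, e2, one_mul,
              mul_zero, add_zero]
            rw [x_skip_after hPR hj' _ ha (by simp), x_rho_after _ _ _ hH' ha (by simp)]
          · simp [hal, hax]
        · have hax : a ≠ x := by
            rintro rfl
            exact hjj (x_info hj' (x_move_of_infoA hj' ha hpx)).2.2.symm
          have hpj : pre ∉ G.Info i j := fun h => hjj (x_info hj' h).2.2.symm
          by_cases hal : a ∈ l
          · obtain ⟨l1, l2, rfl⟩ := List.append_of_mem hal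
            have hI := x_move_of_infoA hj' ha
              (h := pre ++ x :: l1) (x_pre_mem' (by simpa using hH))
            have := x_rho_move_before hPR hj' (G.replace β i b) βt hI
            simp only [List.mem_cons, hal, or_true, if_true, prodAlongSkip, hpj, if_false, hjj,
              this, hB, zero_add]
            ring
          · simp [hal, hax, hjj]
      rw [Finset.sum_congr rfl (fun j hj => Finset.sum_congr rfl (key j hj))]
      simp only [Finset.sum_add_distrib, ← Finset.mul_sum]
      rw [← IH]
      have : ∑ j ∈ Finset.range (G.m i), ∑ a ∈ G.infoA i j,
          (if j = G.infoIdx pre then if a = x then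
            (b (G.infoIdx pre) x - βt i (G.infoIdx pre) x) *
              G.prodAlong (G.replace β i (βt i)) (pre ++ [x]) l else 0 else 0) =
            (b (G.infoIdx pre) x - βt i (G.infoIdx pre) x) *
              G.prodAlong (G.replace β i (βt i)) (pre ++ [x]) l := by
        rw [Finset.sum_eq_single (G.infoIdx pre)]
        · simp [e3]
        · intro j _ hj
          simp [hj]
        · intro h
          exact (h (Finset.mem_range.2 e1)).elim
      rw [this]
      ring
    · have hB : ∀ b' : ℕ → ℕ → ℝ, G.moveProb (G.replace β i b') pre x = G.moveProb β pre x := by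
        intro b'
        unfold moveProb
        cases hc : G.P pre with
        | none => rfl
        | some p =>
          have : p ≠ i := fun e => hP (by rw [hc, e])
          simp [replace, this]
      have hR : ∀ j, G.moveProb (G.rho i j (G.replace β i b) βt) pre x = G.moveProb β pre x := by
        intro j
        unfold moveProb
        cases hc : G.P pre with
        | none => rfl
        | some p =>
          have : p ≠ i := fun e => hP (by rw [hc, e])
          simp [replace, rho, this]
      rw [hB, hB, ← mul_sub, IH, Finset.mul_sum]
      refine Finset.sum_congr rfl fun j hj => ?_
      rw [Finset.mul_sum]
      refine Finset.sum_congr rfl fun a ha => ?_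
      have hj' : j < G.m i := Finset.mem_range.1 hj
      have hax : a ≠ x := by
        rintro rfl
        exact hP (x_info hj' (x_move_of_infoA hj' ha hpx)).2.1
      have hpj : pre ∉ G.Info i j := fun h => hP (x_info hj' h).2.1
      by_cases hal : a ∈ l
      · simp only [hal, if_true, List.mem_cons, or_true, prodAlongSkip, hpj, if_false, hR]
        ring
      · simp [hal, hax]

/-- Payoff in the subgame `r` through action `a` at `I`, skipping the factor at `I`. -/
def xD (G : EFG) (i : Fin G.n) (j a : ℕ) (r : List ℕ) (β : G.Profile) : ℝ :=
  ∑ h ∈ G.Zset.filter (fun h => r <+: h), if a ∈ h.drop r.length then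
    G.u i h * G.prodAlongSkip i j β r (h.drop r.length) else 0

theorem x_Z {h : List ℕ} (hz : h ∈ G.Zset) : h ∈ G.H := (Finset.mem_filter.1 hz).1

theorem x_diff (hPR : G.PerfectRecall) (i : Fin G.n) (β βt : G.Profile) (b : ℕ → ℕ → ℝ)
    (r : List ℕ) :
    G.uExpFrom i (G.replace β i b) r - G.uExpFrom i (G.replace β i (βt i)) r =
      ∑ j ∈ Finset.range (G.m i), ∑ a ∈ G.infoA i j, (b j a - βt i j a) *
        G.xD i j a r (G.rho i j (G.replace β i b) βt) := by
  unfold uExpFrom xD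
  rw [← Finset.sum_sub_distrib]
  simp only [Finset.mul_sum]
  rw [Finset.sum_congr rfl (fun j _ => Finset.sum_comm), Finset.sum_comm]
  refine Finset.sum_congr rfl fun z hz => ?_
  obtain ⟨hzZ, t, rfl⟩ := Finset.mem_filter.1 hz
  rw [← mul_sub, List.drop_left, x_telescope hPR i β βt b r t (x_Z hzZ), Finset.mul_sum]
  refine Finset.sum_congr rfl fun j hj => ?_
  rw [Finset.mul_sum]
  refine Finset.sum_congr rfl fun a ha => ?_
  split_ifs
  · ring
  · simp

end EFG

namespace EFG

variable {G : EFG}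

theorem x_dropLast_pre (h : List ℕ) : h.dropLast <+: h :=
  ⟨h.drop (h.length - 1), by rw [List.dropLast_eq_take, List.take_append_drop]⟩

theorem x_root_nil : G.IsSubgameRoot [] :=
  ⟨G.empty_mem, fun _ _ _ => Or.inl fun _ _ => ⟨_, rfl⟩⟩

theorem x_Yh_nonneg {i : Fin G.n} {β : G.Profile} (hβ : G.IsBehProfile β) {h : List ℕ}
    (hH : h ∈ G.H) : 0 ≤ G.Yh i β h := by
  unfold Yh
  exact x_not_nonneg i β hβ _ _ (by rwa [List.take_append_drop])

/-- The largest root below `h.dropLast`. -/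
theorem x_maxroot (h : List ℕ) : ∃ R : List ℕ, G.IsSubgameRoot R ∧ R <+: h.dropLast ∧
    R.length = G.sgDepthHist h ∧
    ∀ r, G.IsSubgameRoot r → r <+: h.dropLast → r.length ≤ R.length := by
  unfold sgDepthHist
  set S := G.H.filter fun r => G.IsSubgameRoot r ∧ r <+: h.dropLast with hS
  have hne : S.Nonempty :=
    ⟨[], Finset.mem_filter.2 ⟨G.empty_mem, x_root_nil, ⟨_, rfl⟩⟩⟩
  obtain ⟨R, hR, e⟩ := Finset.exists_mem_eq_sup S hne List.length
  obtain ⟨h1, h2, h3⟩ := Finset.mem_filter.1 hR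
  refine ⟨R, h2, h3, e.symm, fun r hr hp => ?_⟩
  rw [← e]
  exact Finset.le_sup (f := List.length) (Finset.mem_filter.2 ⟨hr.1, hr, hp⟩)

theorem x_maxroot_info (i : Fin G.n) (j : ℕ) : ∃ R : List ℕ, G.IsSubgameRoot R ∧
    (∀ h ∈ G.Info i j, R <+: h) ∧ R.length = G.sgDepthInfo i j ∧
    ∀ r, G.IsSubgameRoot r → (∀ h ∈ G.Info i j, r <+: h) → r.length ≤ R.length := by
  unfold sgDepthInfo
  set S := G.H.filter fun r => G.IsSubgameRoot r ∧ ∀ h ∈ G.Info i j, r <+: h with hS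
  have hne : S.Nonempty :=
    ⟨[], Finset.mem_filter.2 ⟨G.empty_mem, x_root_nil, fun _ _ => ⟨_, rfl⟩⟩⟩
  obtain ⟨R, hR, e⟩ := Finset.exists_mem_eq_sup S hne List.length
  obtain ⟨h1, h2, h3⟩ := Finset.mem_filter.1 hR
  refine ⟨R, h2, h3, e.symm, fun r hr hp => ?_⟩
  rw [← e]
  exact Finset.le_sup (f := List.length) (Finset.mem_filter.2 ⟨hr.1, hr, hp⟩)

theorem x_prefix_dropLast {r h : List ℕ} (hp : r <+: h) (hne : r ≠ h) : r <+: h.dropLast := by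
  obtain ⟨t, rfl⟩ := hp
  cases t with
  | nil => simp at hne
  | cons y t =>
    rw [List.dropLast_append_of_ne_nil (by simp)]
    exact List.prefix_append _ _

theorem x_belief_scale (hPR : G.PerfectRecall) {i : Fin G.n} {j : ℕ} (hj : j < G.m i)
    {β : G.Profile} (hβ : G.IsBehProfile β) {μ : G.Belief} (hμ : G.IsBelief μ)
    (hY : G.YConsistent β μ) {r : List ℕ} (hr : G.IsSubgameRoot r)
    (hrI : ∀ h ∈ G.Info i j, r <+: h) :
    ∃ κ : ℝ, 0 ≤ κ ∧ ∀ h ∈ G.Info i j,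
      G.prodAlongNot i β r (h.drop r.length) = κ * μ i j h := by
  have hnn : ∀ h ∈ G.Info i j, 0 ≤ G.prodAlongNot i β r (h.drop r.length) := by
    intro h hI
    obtain ⟨t, rfl⟩ := hrI h hI
    rw [List.drop_left]
    exact x_not_nonneg i β hβ _ _ (x_info hj hI).1
  by_cases hroot : ∃ h ∈ G.Info i j, G.IsSubgameRoot h
  · obtain ⟨h0, hI0, hr0⟩ := hroot
    have hall : ∀ h ∈ G.Info i j, h = h0 := by
      intro h hI
      rcases hr0.2 i j hj with H | H
      · exact (x_prefix_self hPR hj hI0 hI (H h hI)).symm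
      · exact (H h0 hI0 (List.prefix_refl _)).elim
    have hs : G.Info i j = {h0} := by
      ext h
      simp only [Finset.mem_singleton]
      exact ⟨hall h, fun e => e ▸ hI0⟩
    have hμ1 : μ i j h0 = 1 := by
      have := (hμ i j hj).2
      rwa [hs, Finset.sum_singleton] at this
    refine ⟨_, hnn h0 hI0, fun h hI => ?_⟩
    rw [hall h hI, hμ1, mul_one]
  · push Not at hroot
    obtain ⟨h0, hI0⟩ := G.info_nonempty i j hj
    obtain ⟨R, hR, hRp, hRl, hRm⟩ := G.x_maxroot h0
    have hRI : ∀ h ∈ G.Info i j, R <+: h := by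
      rcases hR.2 i j hj with H | H
      · exact H
      · exact (H h0 hI0 (hRp.trans (x_dropLast_pre _))).elim
    have hdl : ∀ r', G.IsSubgameRoot r' → ∀ h ∈ G.Info i j, r' <+: h → r' <+: h.dropLast := by
      intro r' hr' h hI hp
      exact x_prefix_dropLast hp (fun e => hroot h hI (e ▸ hr'))
    have hrR : r <+: R :=
      List.prefix_of_prefix_length_le (hrI h0 hI0) (hRI h0 hI0)
        (hRm r hr (hdl r hr h0 hI0 (hrI h0 hI0)))
    have hdep : ∀ h ∈ G.Info i j, G.sgDepthHist h = R.length := by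
      intro h hI
      obtain ⟨R', hR', hRp', hRl', hRm'⟩ := G.x_maxroot h
      have hRI' : ∀ h ∈ G.Info i j, R' <+: h := by
        rcases hR'.2 i j hj with H | H
        · exact H
        · exact (H h hI (hRp'.trans (x_dropLast_pre _))).elim
      have l1 := hRm R' hR' (hdl R' hR' h0 hI0 (hRI' h0 hI0))
      have l2 := hRm' R hR (hdl R hR h hI (hRI h hI))
      omega
    obtain ⟨s, rfl⟩ := hrR
    refine ⟨G.prodAlongNot i β r s * G.YInfo i j β, mul_nonneg ?_ ?_, fun h hI => ?_⟩
    · exact x_not_nonneg i β hβ _ _ hR.1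
    · exact Finset.sum_nonneg fun h hI => x_Yh_nonneg hβ (x_info hj hI).1
    · rw [mul_assoc, hY i j hj h hI]
      unfold Yh
      rw [hdep h hI]
      obtain ⟨t, rfl⟩ := hRI h hI
      rw [List.take_left, List.drop_left, List.append_assoc, List.drop_left, x_prodNot_append]

theorem x_D_zero {i : Fin G.n} {j a : ℕ} (hj : j < G.m i) (ha : a ∈ G.infoA i j)
    {r : List ℕ} (hrI : ∀ h ∈ G.Info i j, ¬ r <+: h) (β : G.Profile) :
    G.xD i j a r β = 0 := by
  unfold xD
  refine Finset.sum_eq_zero fun z hz => ?_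
  obtain ⟨hzZ, t, rfl⟩ := Finset.mem_filter.1 hz
  rw [List.drop_left, if_neg]
  intro hat
  obtain ⟨l1, l2, rfl⟩ := List.append_of_mem hat
  have hI := x_move_of_infoA hj ha (h := r ++ l1) (x_pre_mem' (by simpa using x_Z hzZ))
  exact hrI _ hI (List.prefix_append _ _)

theorem x_factor (hPR : G.PerfectRecall) {i : Fin G.n} {j : ℕ} (hj : j < G.m i)
    {β : G.Profile} (hβ : G.IsBehProfile β) (βt : G.Profile) {μ : G.Belief} (hμ : G.IsBelief μ)
    (hY : G.YConsistent β μ) {b : ℕ → ℕ → ℝ} (hb : G.IsBehStrategy i b)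
    {r : List ℕ} (hr : G.IsSubgameRoot r) :
    ∃ κ : ℝ, 0 ≤ κ ∧ ∀ a ∈ G.infoA i j,
      G.xD i j a r (G.rho i j (G.replace β i b) βt) =
        κ * G.uCond i j a (G.rho i j β βt) μ := by
  rcases hr.2 i j hj with hrI | hrI
  swap
  · exact ⟨0, le_refl _, fun a ha => by rw [x_D_zero hj ha hrI, zero_mul]⟩
  obtain ⟨κ, hκ, hs⟩ := x_belief_scale hPR hj hβ hμ hY hr hrI
  obtain ⟨h0, hI0⟩ := G.info_nonempty i j hj
  set c := ((G.recordFrom i r (h0.drop r.length)).map (fun p => b p.1 p.2)).prod with hc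
  have hc0 : 0 ≤ c := by
    refine x_own_nonneg i b hb _ _ ?_
    obtain ⟨t, rfl⟩ := hrI h0 hI0
    rw [List.drop_left]
    exact (x_info hj hI0).1
  have hrec : ∀ h ∈ G.Info i j,
      G.recordFrom i r (h.drop r.length) = G.recordFrom i r (h0.drop r.length) := by
    intro h hI
    have := hPR i j hj h hI h0 hI0
    obtain ⟨t, rfl⟩ := hrI h hI
    obtain ⟨t0, rfl⟩ := hrI h0 hI0
    rw [x_record_append, x_record_append] at this
    rw [List.drop_left, List.drop_left]
    simpa using this
  refine ⟨c * κ, mul_nonneg hc0 hκ, fun a ha => ?_⟩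
  unfold xD uCond
  rw [Finset.mul_sum, Finset.sum_filter, Finset.sum_filter]
  refine Finset.sum_congr rfl fun z hz => ?_
  have hzH := x_Z hz
  by_cases haz : a ∈ z
  · obtain ⟨l1, tl, rfl⟩ := List.append_of_mem haz
    have hI := x_move_of_infoA hj ha (x_pre_mem' hzH)
    have hown := hs _ hI
    have hre := hrec _ hI
    obtain ⟨mid, rfl⟩ := hrI l1 hI
    rw [List.drop_left] at hown hre
    rw [if_pos haz, x_nu hPR hj β βt μ ha hzH, List.append_assoc, List.drop_left,
      if_pos (List.prefix_append _ _), if_pos (by simp),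
      x_skip_full hPR hj β βt b ha hzH, x_own, hown, hre]
    rw [← hc]
    ring
  · rw [if_neg haz]
    have : a ∉ z.drop r.length := fun h => haz (List.mem_of_mem_drop h)
    simp [this]

theorem x_diamond {i : Fin G.n} {j : ℕ} (hj : j < G.m i) {R : List ℕ}
    (hRI : ∀ h ∈ G.Info i j, R <+: h) (hl : R.length = G.sgDepthInfo i j)
    {a : ℕ} (ha : a ∈ G.infoA i j) (β : G.Profile) :
    G.uDiamondAct i j a β = G.xD i j a R β := by
  unfold uDiamondAct xD
  rw [← hl, Finset.sum_filter, Finset.sum_filter]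
  refine Finset.sum_congr rfl fun z hz => ?_
  have hzH := x_Z hz
  by_cases haz : a ∈ z
  · obtain ⟨l1, tl, rfl⟩ := List.append_of_mem haz
    have hI := x_move_of_infoA hj ha (x_pre_mem' hzH)
    obtain ⟨mid, rfl⟩ := hRI l1 hI
    rw [if_pos haz, List.append_assoc, List.drop_left, List.take_left,
      if_pos (List.prefix_append _ _), if_pos (by simp)]
  · rw [if_neg haz]
    have : a ∉ z.drop R.length := fun h => haz (List.mem_of_mem_drop h)
    simp [this]

theorem x_chain {i : Fin G.n} {j : ℕ} (hj : j < G.m i) {r s : List ℕ}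
    (hRI : ∀ h ∈ G.Info i j, r ++ s <+: h)
    {a : ℕ} (ha : a ∈ G.infoA i j) (β : G.Profile) :
    G.xD i j a r β = G.prodAlongSkip i j β r s * G.xD i j a (r ++ s) β := by
  unfold xD
  rw [Finset.mul_sum, Finset.sum_filter, Finset.sum_filter]
  refine Finset.sum_congr rfl fun z hz => ?_
  have hzH := x_Z hz
  by_cases haz : a ∈ z
  · obtain ⟨l1, tl, rfl⟩ := List.append_of_mem haz
    have hI := x_move_of_infoA hj ha (x_pre_mem' hzH)
    obtain ⟨mid, rfl⟩ := hRI l1 hI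
    rw [List.append_assoc (r ++ s), List.drop_left, if_pos (List.prefix_append _ _),
      if_pos (by simp), List.append_assoc r, List.drop_left, if_pos (by simp),
      if_pos (by simp), x_prodSkip_append]
    ring
  · have h1 : a ∉ z.drop r.length := fun h => haz (List.mem_of_mem_drop h)
    have h2 : a ∉ z.drop (r ++ s).length := fun h => haz (List.mem_of_mem_drop h)
    simp only [h1, h2]
    simp

theorem x_exists_belief {β : G.Profile} (hβ : G.IsBehProfile β) :
    ∃ μ : G.Belief, G.IsBelief μ ∧ G.YConsistent β μ := by
  refine ⟨fun i j h => if G.YInfo i j β = 0 then ((G.Info i j).card : ℝ)⁻¹ else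
    G.Yh i β h / G.YInfo i j β, fun i j hj => ⟨fun h hI => ?_, ?_⟩, fun i j hj h hI => ?_⟩
  · have h1 := x_Yh_nonneg (i := i) hβ (x_info hj hI).1
    have h2 : 0 ≤ G.YInfo i j β :=
      Finset.sum_nonneg fun h hI => x_Yh_nonneg hβ (x_info hj hI).1
    dsimp only
    split_ifs <;> positivity
  · dsimp only
    split_ifs with h0
    · have : ((G.Info i j).card : ℝ) ≠ 0 := by
        have := (G.info_nonempty i j hj).card_pos
        positivity
      simp [this]
    · rw [← Finset.sum_div]
      exact div_self h0
  · dsimp only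
    split_ifs with h0
    · rw [h0, zero_mul]
      exact ((Finset.sum_eq_zero_iff_of_nonneg
        fun h hI => x_Yh_nonneg hβ (x_info hj hI).1).1 h0 h hI).symm
    · field_simp

/-- Depth of an information set. -/
def xdepth (G : EFG) (i : Fin G.n) (j : ℕ) : ℕ :=
  (G.Info i j).sup fun h => (G.recordFrom i [] h).length

theorem x_depth_eq (hPR : G.PerfectRecall) {i : Fin G.n} {j : ℕ} (hj : j < G.m i) {h : List ℕ}
    (hI : h ∈ G.Info i j) : G.xdepth i j = (G.recordFrom i [] h).length := by
  unfold xdepth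
  apply le_antisymm
  · exact Finset.sup_le fun h' hI' => by rw [hPR i j hj h hI h' hI']
  · exact Finset.le_sup (f := fun h => (G.recordFrom i [] h).length) hI

theorem x_depth_lt (hPR : G.PerfectRecall) {i : Fin G.n} {j q : ℕ} (hj : j < G.m i)
    (hq : q < G.m i) (ha : ∃ h ∈ G.Info i q, ∃ b ∈ h, b ∈ G.infoA i j) :
    G.xdepth i j < G.xdepth i q := by
  obtain ⟨h, hI, b, hb, hbA⟩ := ha
  rw [x_depth_eq hPR hq hI]
  obtain ⟨l1, l2, rfl⟩ := List.append_of_mem hb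
  have hI1 := x_move_of_infoA hj hbA (x_pre_mem' (x_info hq hI).1)
  rw [x_depth_eq hPR hj hI1, x_record_append]
  simp [recordFrom, (x_info hj hI1).2.1]

theorem x_exists_bt (i : Fin G.n)
    (F : (ℕ → ℕ → ℝ) → ℕ → ℕ → ℝ)
    (hF : ∀ b b' : ℕ → ℕ → ℝ, ∀ j < G.m i, (∀ q < G.m i, G.xdepth i j < G.xdepth i q →
      b q = b' q) → (∀ q, G.m i ≤ q → b q = b' q) → F b j = F b' j) :
    ∃ b : ℕ → ℕ → ℝ, ∀ j < G.m i, ∃ x ∈ G.infoA i j,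
      (∀ a ∈ G.infoA i j, F b j a ≤ F b j x) ∧ b j = fun a => if a = x then 1 else 0 := by
  set N := (Finset.range (G.m i)).sup (G.xdepth i) + 1 with hN
  have main : ∀ k : ℕ, ∃ b : ℕ → ℕ → ℝ, ∀ j < G.m i, N ≤ G.xdepth i j + k → ∃ x ∈ G.infoA i j,
      (∀ a ∈ G.infoA i j, F b j a ≤ F b j x) ∧ b j = fun a => if a = x then 1 else 0 := by
    intro k
    induction k with
    | zero =>
      refine ⟨fun _ _ => 0, fun j hj hd => ?_⟩
      have : G.xdepth i j ≤ (Finset.range (G.m i)).sup (G.xdepth i) :=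
        Finset.le_sup (Finset.mem_range.2 hj)
      omega
    | succ k ih =>
      obtain ⟨b, hb⟩ := ih
      have hmax : ∀ j, ∃ x, j < G.m i → x ∈ G.infoA i j ∧ ∀ a ∈ G.infoA i j, F b j a ≤ F b j x := by
        intro j
        by_cases hj : j < G.m i
        · obtain ⟨x, hx, hm⟩ := Finset.exists_max_image (G.infoA i j) (F b j) (x_infoA_nonempty hj)
          exact ⟨x, fun _ => ⟨hx, hm⟩⟩
        · exact ⟨0, fun h => (hj h).elim⟩
      choose X hX using hmax
      set b' : ℕ → ℕ → ℝ := fun j => if j < G.m i ∧ N = G.xdepth i j + (k + 1) then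
        (fun a => if a = X j then 1 else 0) else b j with hb'
      have hbb : ∀ j < G.m i, N ≤ G.xdepth i j + (k + 1) → F b' j = F b j := by
        intro j hj hd
        apply hF _ _ _ hj
        · intro q hq hlt
          simp only [hb']
          rw [if_neg]
          omega
        · intro q hq
          simp only [hb']
          rw [if_neg]
          omega
      refine ⟨b', fun j hj hd => ?_⟩
      rw [hbb j hj hd]
      by_cases he : N = G.xdepth i j + (k + 1)
      · refine ⟨X j, (hX j hj).1, (hX j hj).2, ?_⟩
        simp only [hb']
        rw [if_pos ⟨hj, he⟩]
      · obtain ⟨x, h1, h2, h3⟩ := hb j hj (by omega)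
        refine ⟨x, h1, h2, ?_⟩
        rw [← h3]
        simp only [hb']
        rw [if_neg]
        tauto
  obtain ⟨b, hb⟩ := main N
  exact ⟨b, fun j hj => hb j hj (by omega)⟩

theorem x_exists_bt_all (hPR : G.PerfectRecall) (β : G.Profile) (μ : G.Belief) :
    ∃ βt : G.Profile, ∀ i, ∀ j < G.m i, ∃ x ∈ G.infoA i j,
      (∀ a ∈ G.infoA i j, G.uCond i j a (G.rho i j β βt) μ ≤ G.uCond i j x (G.rho i j β βt) μ) ∧
      βt i j = fun a => if a = x then 1 else 0 := by
  have : ∀ i : Fin G.n, ∃ b : ℕ → ℕ → ℝ, ∀ j < G.m i, ∃ x ∈ G.infoA i j,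
      (∀ a ∈ G.infoA i j, G.uCond i j a (G.rho i j β (fun _ => b)) μ ≤
        G.uCond i j x (G.rho i j β (fun _ => b)) μ) ∧
      b j = fun a => if a = x then 1 else 0 := by
    intro i
    apply x_exists_bt i (fun b j a => G.uCond i j a (G.rho i j β (fun _ => b)) μ)
    intro b b' j hj h1 h2
    have : G.rho i j β (fun _ => b) = G.rho i j β (fun _ => b') := by
      funext p q
      unfold rho
      split_ifs with hc
      · by_cases hq : q < G.m i
        · exact h1 q hq (x_depth_lt hPR hj hq hc.2)
        · exact h2 q (not_lt.1 hq)
      · rfl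
    simp only [this]
  choose B hB using this
  exact ⟨B, hB⟩

end EFG

/-- Theorem 5: `β*` is a subgame perfect equilibrium in behavioral strategies iff the
polynomial system (18) is solvable. -/
theorem stmt10 (G : EFG) (hPR : G.PerfectRecall) (β : G.Profile) (hβ : G.IsBehProfile β) :
    G.IsSubgamePerfect β ↔
      ∃ (βt : G.Profile) (μ : G.Belief) (lam lamt : Fin G.n → ℕ → ℕ → ℝ)
        (ze zet : Fin G.n → ℕ → ℝ),
        (∀ (i : Fin G.n) (j : ℕ), j < G.m i → ∀ a ∈ G.infoA i j,
          G.uDiamondAct i j a (G.rho i j β βt) + lam i j a - ze i j = 0) ∧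
        (∀ (i : Fin G.n) (j : ℕ), j < G.m i → ∀ a ∈ G.infoA i j,
          G.uCond i j a (G.rho i j β βt) μ + lamt i j a - zet i j = 0) ∧
        (∀ (i : Fin G.n) (j : ℕ), j < G.m i → ∀ h ∈ G.Info i j,
          G.YInfo i j β * μ i j h = G.Yh i β h ∧ 0 ≤ μ i j h) ∧
        (∀ (i : Fin G.n) (j : ℕ), j < G.m i →
          (∑ h ∈ G.Info i j, μ i j h = 1) ∧ (∑ a ∈ G.infoA i j, β i j a = 1) ∧
          (∑ a ∈ G.infoA i j, βt i j a = 1)) ∧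
        (∀ (i : Fin G.n) (j : ℕ), j < G.m i → ∀ a ∈ G.infoA i j,
          β i j a * lam i j a = 0 ∧ βt i j a * lamt i j a = 0 ∧
          0 ≤ β i j a ∧ 0 ≤ lam i j a ∧ 0 ≤ βt i j a ∧ 0 ≤ lamt i j a) := by
  constructor
  · rintro ⟨-, hsp⟩
    obtain ⟨μ, hμ, hY⟩ := EFG.x_exists_belief hβ
    obtain ⟨βt, hbt⟩ := EFG.x_exists_bt_all hPR β μ
    have hbs : ∀ i : Fin G.n, G.IsBehStrategy i (βt i) := by
      intro i j hj
      obtain ⟨x, hx, hm, e⟩ := hbt i j hj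
      rw [e]
      refine ⟨fun a _ => ?_, by simp [hx]⟩
      dsimp only
      split_ifs <;> norm_num
    -- every action is weakly worse than the value of `βt`
    have hV : ∀ (i : Fin G.n) (j : ℕ), j < G.m i → ∀ a ∈ G.infoA i j,
        G.uCond i j a (G.rho i j β βt) μ ≤
          ∑ a ∈ G.infoA i j, βt i j a * G.uCond i j a (G.rho i j β βt) μ := by
      intro i j hj a ha
      obtain ⟨x, hx, hm, e⟩ := hbt i j hj
      rw [e]
      simpa [hx] using hm a ha
    have hterm : ∀ (i : Fin G.n) (r : List ℕ), G.IsSubgameRoot r → ∀ j < G.m i,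
        ∑ a ∈ G.infoA i j, (β i j a - βt i j a) *
          G.xD i j a r (G.rho i j (G.replace β i (β i)) βt) ≤ 0 := by
      intro i r hr j hj
      obtain ⟨κ, hκ, hk⟩ := EFG.x_factor hPR hj hβ βt hμ hY (hβ i) hr
      rw [Finset.sum_congr rfl fun a ha => by rw [hk a ha]]
      set M := ∑ a ∈ G.infoA i j, βt i j a * G.uCond i j a (G.rho i j β βt) μ with hM
      have h1 : ∑ a ∈ G.infoA i j, (β i j a - βt i j a) *
          (κ * G.uCond i j a (G.rho i j β βt) μ) =
          κ * (∑ a ∈ G.infoA i j, β i j a * G.uCond i j a (G.rho i j β βt) μ - M) := by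
        rw [hM, ← Finset.sum_sub_distrib, Finset.mul_sum]
        exact Finset.sum_congr rfl fun a _ => by ring
      have h2 : ∑ a ∈ G.infoA i j, β i j a * G.uCond i j a (G.rho i j β βt) μ ≤ M := by
        calc _ ≤ ∑ a ∈ G.infoA i j, β i j a * M :=
              Finset.sum_le_sum fun a ha =>
                mul_le_mul_of_nonneg_left (hV i j hj a ha) ((hβ i j hj).1 a ha)
          _ = M := by rw [← Finset.sum_mul, (hβ i j hj).2, one_mul]
      rw [h1]
      exact mul_nonpos_of_nonneg_of_nonpos hκ (by linarith)
    have hzero : ∀ (i : Fin G.n) (r : List ℕ), G.IsSubgameRoot r → ∀ j < G.m i,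
        ∑ a ∈ G.infoA i j, (β i j a - βt i j a) *
          G.xD i j a r (G.rho i j (G.replace β i (β i)) βt) = 0 := by
      intro i r hr j hj
      have hd := EFG.x_diff hPR i β βt (β i) r
      have hs := hsp r hr i (βt i) (hbs i)
      rw [EFG.x_replace_self] at hd
      have hall : ∀ j ∈ Finset.range (G.m i), ∑ a ∈ G.infoA i j, (β i j a - βt i j a) *
          G.xD i j a r (G.rho i j β βt) ≤ 0 := by
        intro j hj
        have := hterm i r hr j (Finset.mem_range.1 hj)
        rwa [EFG.x_replace_self] at this
      have h0 : ∑ j ∈ Finset.range (G.m i), ∑ a ∈ G.infoA i j, (β i j a - βt i j a) *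
          G.xD i j a r (G.rho i j β βt) = 0 :=
        le_antisymm (Finset.sum_nonpos hall) (by linarith)
      rw [EFG.x_replace_self]
      exact (Finset.sum_eq_zero_iff_of_nonpos hall).1 h0 j (Finset.mem_range.2 hj)
    have hdia : ∀ (i : Fin G.n) (j : ℕ), j < G.m i → ∀ a ∈ G.infoA i j,
        G.uDiamondAct i j a (G.rho i j β βt) ≤
          ∑ a ∈ G.infoA i j, β i j a * G.uDiamondAct i j a (G.rho i j β βt) := by
      intro i j hj a ha
      obtain ⟨R, hR, hRI, hRl, -⟩ := EFG.x_maxroot_info i j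
      obtain ⟨κ, hκ, hk⟩ := EFG.x_factor hPR hj hβ βt hμ hY (hβ i) hR
      have hz := hzero i R hR j hj
      rw [EFG.x_replace_self] at hk hz
      have hD : ∀ a ∈ G.infoA i j, G.uDiamondAct i j a (G.rho i j β βt) =
          G.xD i j a R (G.rho i j β βt) := fun a ha => EFG.x_diamond hj hRI hRl ha _
      have e1 : ∑ a ∈ G.infoA i j, β i j a * G.uDiamondAct i j a (G.rho i j β βt) =
          κ * ∑ a ∈ G.infoA i j, βt i j a * G.uCond i j a (G.rho i j β βt) μ := by
        have e2 : ∑ a ∈ G.infoA i j, β i j a * G.uDiamondAct i j a (G.rho i j β βt) =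
            ∑ a ∈ G.infoA i j, βt i j a * G.xD i j a R (G.rho i j β βt) := by
          rw [Finset.sum_congr rfl fun a ha => by rw [hD a ha]]
          simp only [sub_mul, Finset.sum_sub_distrib] at hz
          linarith
        rw [e2, Finset.mul_sum]
        refine Finset.sum_congr rfl fun a ha => ?_
        rw [hk a ha]
        ring
      rw [e1, hD a ha, hk a ha]
      exact mul_le_mul_of_nonneg_left (hV i j hj a ha) hκ
    -- complementary slackness
    have hcs : ∀ (s : Finset ℕ) (p f : ℕ → ℝ), (∀ a ∈ s, 0 ≤ p a) → ∑ a ∈ s, p a = 1 →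
        (∀ a ∈ s, f a ≤ ∑ a ∈ s, p a * f a) →
        ∀ a ∈ s, p a * (∑ a ∈ s, p a * f a - f a) = 0 := by
      intro s p f hp hs hf
      have : ∑ a ∈ s, p a * (∑ a ∈ s, p a * f a - f a) = 0 := by
        simp only [mul_sub, Finset.sum_sub_distrib]
        rw [← Finset.sum_mul, hs]
        ring
      exact (Finset.sum_eq_zero_iff_of_nonneg fun a ha =>
        mul_nonneg (hp a ha) (sub_nonneg.2 (hf a ha))).1 this
    refine ⟨βt, μ,
      fun i j a => ∑ a ∈ G.infoA i j, β i j a * G.uDiamondAct i j a (G.rho i j β βt) -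
        G.uDiamondAct i j a (G.rho i j β βt),
      fun i j a => ∑ a ∈ G.infoA i j, βt i j a * G.uCond i j a (G.rho i j β βt) μ -
        G.uCond i j a (G.rho i j β βt) μ,
      fun i j => ∑ a ∈ G.infoA i j, β i j a * G.uDiamondAct i j a (G.rho i j β βt),
      fun i j => ∑ a ∈ G.infoA i j, βt i j a * G.uCond i j a (G.rho i j β βt) μ,
      ?_, ?_, ?_, ?_, ?_⟩
    · intro i j hj a ha
      ring
    · intro i j hj a ha
      ring
    · intro i j hj h hI
      exact ⟨hY i j hj h hI, (hμ i j hj).1 h hI⟩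
    · intro i j hj
      exact ⟨(hμ i j hj).2, (hβ i j hj).2, (hbs i j hj).2⟩
    · intro i j hj a ha
      exact ⟨hcs _ _ _ (hβ i j hj).1 (hβ i j hj).2 (hdia i j hj) a ha,
        hcs _ _ _ (hbs i j hj).1 (hbs i j hj).2 (hV i j hj) a ha,
        (hβ i j hj).1 a ha, sub_nonneg.2 (hdia i j hj a ha),
        (hbs i j hj).1 a ha, sub_nonneg.2 (hV i j hj a ha)⟩
  · rintro ⟨βt, μ, lam, lamt, ze, zet, h1, h2, h3, h4, h5⟩
    refine ⟨hβ, fun r hr i b hb => ?_⟩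
    have hμ : G.IsBelief μ := fun i j hj => ⟨fun h hI => (h3 i j hj h hI).2, (h4 i j hj).1⟩
    have hY : G.YConsistent β μ := fun i j hj h hI => (h3 i j hj h hI).1
    have hV : ∀ j < G.m i, ∀ a ∈ G.infoA i j,
        G.uCond i j a (G.rho i j β βt) μ ≤ zet i j := by
      intro j hj a ha
      have := h2 i j hj a ha
      have := (h5 i j hj a ha).2.2.2.2.2
      linarith
    have hVt : ∀ j < G.m i,
        ∑ a ∈ G.infoA i j, βt i j a * G.uCond i j a (G.rho i j β βt) μ = zet i j := by
      intro j hj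
      rw [← one_mul (zet i j), ← (h4 i j hj).2.2, Finset.sum_mul]
      refine Finset.sum_congr rfl fun a ha => ?_
      have e1 := h2 i j hj a ha
      have e2 := (h5 i j hj a ha).2.1
      linear_combination βt i j a * e1 - e2
    -- any strategy is weakly worse than `βt`
    have hle : G.uExpFrom i (G.replace β i b) r ≤ G.uExpFrom i (G.replace β i (βt i)) r := by
      have hd := EFG.x_diff hPR i β βt b r
      have : ∑ j ∈ Finset.range (G.m i), ∑ a ∈ G.infoA i j, (b j a - βt i j a) *
          G.xD i j a r (G.rho i j (G.replace β i b) βt) ≤ 0 := by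
        refine Finset.sum_nonpos fun j hj => ?_
        have hj := Finset.mem_range.1 hj
        obtain ⟨κ, hκ, hk⟩ := EFG.x_factor hPR hj hβ βt hμ hY hb hr
        have e : ∑ a ∈ G.infoA i j, (b j a - βt i j a) *
            G.xD i j a r (G.rho i j (G.replace β i b) βt) =
            κ * (∑ a ∈ G.infoA i j, b j a * G.uCond i j a (G.rho i j β βt) μ - zet i j) := by
          rw [← hVt j hj, ← Finset.sum_sub_distrib, Finset.mul_sum]
          refine Finset.sum_congr rfl fun a ha => ?_
          rw [hk a ha]
          ring
        have h2 : ∑ a ∈ G.infoA i j, b j a * G.uCond i j a (G.rho i j β βt) μ ≤ zet i j := by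
          calc _ ≤ ∑ a ∈ G.infoA i j, b j a * zet i j :=
                Finset.sum_le_sum fun a ha =>
                  mul_le_mul_of_nonneg_left (hV j hj a ha) ((hb j hj).1 a ha)
            _ = zet i j := by rw [← Finset.sum_mul, (hb j hj).2, one_mul]
        rw [e]
        exact mul_nonpos_of_nonneg_of_nonpos hκ (by linarith)
      linarith
    -- `β` does as well as `βt`
    have heq : G.uExpFrom i β r - G.uExpFrom i (G.replace β i (βt i)) r = 0 := by
      have hd := EFG.x_diff hPR i β βt (β i) r
      rw [EFG.x_replace_self] at hd
      rw [hd]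
      refine Finset.sum_eq_zero fun j hj => ?_
      have hj := Finset.mem_range.1 hj
      rcases hr.2 i j hj with hrI | hrI
      swap
      · exact Finset.sum_eq_zero fun a ha => by rw [EFG.x_D_zero hj ha hrI, mul_zero]
      obtain ⟨R, hR, hRI, hRl, hRm⟩ := EFG.x_maxroot_info i j
      obtain ⟨κ, hκ, hk⟩ := EFG.x_factor hPR hj hβ βt hμ hY (hβ i) hR
      rw [EFG.x_replace_self] at hk
      have hD : ∀ a ∈ G.infoA i j, G.uDiamondAct i j a (G.rho i j β βt) =
          G.xD i j a R (G.rho i j β βt) := fun a ha => EFG.x_diamond hj hRI hRl ha _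
      have hb1 : ∑ a ∈ G.infoA i j, β i j a * G.xD i j a R (G.rho i j β βt) = ze i j := by
        rw [← one_mul (ze i j), ← (h4 i j hj).2.1, Finset.sum_mul]
        refine Finset.sum_congr rfl fun a ha => ?_
        have e1 := h1 i j hj a ha
        rw [hD a ha] at e1
        have e2 := (h5 i j hj a ha).1
        linear_combination β i j a * e1 - e2
      have hb2 : ∑ a ∈ G.infoA i j, βt i j a * G.xD i j a R (G.rho i j β βt) =
          κ * zet i j := by
        rw [← hVt j hj, Finset.mul_sum]
        refine Finset.sum_congr rfl fun a ha => ?_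
        rw [hk a ha]
        ring
      have l1 : ze i j ≤ κ * zet i j := by
        rw [← hb1]
        calc _ ≤ ∑ a ∈ G.infoA i j, β i j a * (κ * zet i j) := by
              refine Finset.sum_le_sum fun a ha =>
                mul_le_mul_of_nonneg_left ?_ ((hβ i j hj).1 a ha)
              rw [hk a ha]
              exact mul_le_mul_of_nonneg_left (hV j hj a ha) hκ
          _ = _ := by rw [← Finset.sum_mul, (hβ i j hj).2, one_mul]
      have l2 : κ * zet i j ≤ ze i j := by
        rw [← hb2]
        calc _ ≤ ∑ a ∈ G.infoA i j, βt i j a * ze i j := by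
              refine Finset.sum_le_sum fun a ha =>
                mul_le_mul_of_nonneg_left ?_ (h5 i j hj a ha).2.2.2.2.1
              have e1 := h1 i j hj a ha
              rw [hD a ha] at e1
              have := (h5 i j hj a ha).2.2.2.1
              linarith
          _ = _ := by rw [← Finset.sum_mul, (h4 i j hj).2.2, one_mul]
      obtain ⟨h0, hI0⟩ := G.info_nonempty i j hj
      obtain ⟨s, rfl⟩ : r <+: R :=
        List.prefix_of_prefix_length_le (hrI h0 hI0) (hRI h0 hI0) (hRm r hr hrI)
      have e : ∑ a ∈ G.infoA i j, (β i j a - βt i j a) * G.xD i j a r (G.rho i j β βt) =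
          G.prodAlongSkip i j (G.rho i j β βt) r s *
            (∑ a ∈ G.infoA i j, β i j a * G.xD i j a (r ++ s) (G.rho i j β βt) -
             ∑ a ∈ G.infoA i j, βt i j a * G.xD i j a (r ++ s) (G.rho i j β βt)) := by
        rw [← Finset.sum_sub_distrib, Finset.mul_sum]
        refine Finset.sum_congr rfl fun a ha => ?_
        rw [EFG.x_chain hj hRI ha]
        ring
      rw [e, hb1, hb2, le_antisymm l1 l2]
      ring
    linarith
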